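/- (Cyclicity of type II symbols.) Let a > 1 and b ∈ ℂ with Re(b) > 0, and let φ(w) = a·w + b. Then the composition operator C_φ is cyclic on H²(ℂ₊): there exists f ∈ H²(ℂ₊) such that the linear span of the orbit {f ∘ φ^[n] : n ∈ ℕ} is dense in H²(ℂ₊), i.e. for every g ∈ H²(ℂ₊) and every ε > 0 there is a finite linear combination h of the functions f ∘ φ^[n] with ‖g − h‖ < ε. -/

import Mathlib

open Complex MeasureTheory

/-- The square of the `H²(ℂ₊)` norm: `sup_{x>0} ∫ |f(x+iy)|² dy`, valued in `ℝ≥0∞`. -/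
noncomputable def H2normSq (f : ℂ → ℂ) : ENNReal :=
  ⨆ x ∈ Set.Ioi (0 : ℝ), ∫⁻ y : ℝ, (‖f ((x : ℂ) + (y : ℂ) * Complex.I)‖₊ : ENNReal) ^ 2

/-- Membership in the Hardy space `H²(ℂ₊)` of the right half-plane. -/
def MemH2 (f : ℂ → ℂ) : Prop :=
  DifferentiableOn ℂ f {w : ℂ | 0 < w.re} ∧ H2normSq f < ⊤

open Filter Set Topology FourierTransform
open scoped SchwartzMap ENNReal ComplexConjugate

/-!
The Laplace transform identifies `L²(0, ∞)` with `H²(ℂ₊)` (Paley–Wiener) and sends `u ↦ e^{-lu}` to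
`w ↦ 1/(w + l)`. With `c = b/(a - 1)`, the orbit of `w ↦ 1/(w + c + 1)` under composition with `φ`
consists of nonzero multiples of the kernels `w ↦ 1/(w + lₙ)`, where `lₙ = c + a⁻ⁿ → c`. A vector of
`L²(0, ∞)` orthogonal to all `u ↦ e^{-lₙu}` has a Laplace transform that vanishes at the conjugates
of the `lₙ`, which accumulate in `ℂ₊`, hence everywhere.

The Laplace transform is onto because `g ∈ H²` can be damped to `g(w)/(1 + δw) ∈ H¹`, for which the
inversion integral converges absolutely, and the preimages obtained in this way are bounded in
`L²(0, ∞)`, so that they have a weak limit as `δ → 0`.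
-/

section Plancherel

variable {V F : Type*} [NormedAddCommGroup V] [InnerProductSpace ℝ V] [FiniteDimensional ℝ V]
  [MeasurableSpace V] [BorelSpace V] [NormedAddCommGroup F] [InnerProductSpace ℂ F] {f : V → F}

theorem continuous_fourier_of_integrable (hf : Integrable f) : Continuous (𝓕 f) :=
  VectorFourier.fourierIntegral_continuous Real.continuous_fourierChar
    (by exact continuous_inner) hf

theorem continuous_fourierInv_of_integrable (hf : Integrable f) : Continuous (𝓕⁻ f) := by
  rw [Real.fourierInv_eq_fourier_comp_neg]
  exact continuous_fourier_of_integrable hf.comp_neg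

theorem fourier_toLp_ae_eq [CompleteSpace F] (hf : Integrable f) (hf₂ : MemLp f 2) :
    (𝓕 (hf₂.toLp f) : Lp F 2 (volume : Measure V)) =ᵐ[volume] 𝓕 f := by
  -- Both sides define the same tempered distribution.
  refine ae_eq_of_integral_contDiff_smul_eq
    ((Lp.memLp (𝓕 (hf₂.toLp f))).locallyIntegrable one_le_two)
    (continuous_fourier_of_integrable hf).locallyIntegrable fun g hg hgs ↦ ?_
  let G : 𝓢(V, ℂ) := HasCompactSupport.toSchwartzMap (f := Complex.ofRealCLM ∘ g)
    (hgs.comp_left rfl) (by fun_prop)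
  have hG (x : V) : G x = g x := rfl
  calc ∫ x, g x • (𝓕 (hf₂.toLp f) : Lp F 2 volume) x
      = Lp.toTemperedDistribution (𝓕 (hf₂.toLp f)) G := by simp [hG]
    _ = ∫ x, 𝓕 (G : V → ℂ) x • hf₂.toLp f x := by
        rw [← Lp.fourier_toTemperedDistribution_eq, TemperedDistribution.fourier_apply,
          Lp.toTemperedDistribution_apply]
        simp [SchwartzMap.fourier_coe]
    _ = ∫ x, 𝓕 (G : V → ℂ) x • f x :=
        integral_congr_ae <| hf₂.coeFn_toLp.mono fun x hx ↦ by simp only [hx]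
    _ = ∫ x, G x • 𝓕 f x := by
        simpa using! VectorFourier.integral_fourierIntegral_smul_eq_flip (L := innerₗ V)
          Real.continuous_fourierChar continuous_inner G.integrable hf
    _ = ∫ x, g x • 𝓕 f x := by simp [hG]

theorem eLpNorm_fourier [CompleteSpace F] (hf : Integrable f) (hf₂ : MemLp f 2) :
    eLpNorm (𝓕 f) 2 = eLpNorm f 2 := by
  rw [← eLpNorm_congr_ae (fourier_toLp_ae_eq hf hf₂), ← eLpNorm_congr_ae hf₂.coeFn_toLp,
    ← Lp.enorm_def, ← Lp.enorm_def, ← ofReal_norm, ← ofReal_norm, Lp.norm_fourier_eq]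

theorem eLpNorm_fourierInv [CompleteSpace F] (hf : Integrable f) (hf₂ : MemLp f 2) :
    eLpNorm (𝓕⁻ f) 2 = eLpNorm f 2 := by
  have hcomp : 𝓕⁻ f = 𝓕 f ∘ Neg.neg := funext (Real.fourierInv_eq_fourier_neg f)
  rw [hcomp, eLpNorm_comp_measurePreserving
    (continuous_fourier_of_integrable hf).aestronglyMeasurable
    (Measure.measurePreserving_neg volume), eLpNorm_fourier hf hf₂]

end Plancherel

theorem lintegral_enorm_sq_eq_eLpNorm {α E : Type*} [MeasurableSpace α] {μ : Measure α} [ENorm E]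
    (f : α → E) : ∫⁻ x, ‖f x‖ₑ ^ 2 ∂μ = eLpNorm f 2 μ ^ 2 := by
  simpa using (eLpNorm_nnreal_pow_eq_lintegral (p := 2) (f := f) (μ := μ) two_ne_zero).symm

theorem lintegral_comp_const_mul (f : ℝ → ℝ≥0∞) {r : ℝ} (hr : r ≠ 0) :
    ∫⁻ y, f (r * y) = ENNReal.ofReal |r⁻¹| * ∫⁻ y, f y := by
  rw [← smul_eq_mul, ← lintegral_smul_measure, ← Real.map_volume_mul_left hr,
    (measurableEmbedding_mulLeft₀ hr).lintegral_map]

theorem ennreal_mul_le_sq_add_sq (a b : ℝ≥0∞) : a * b ≤ a ^ 2 + b ^ 2 := by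
  rcases le_total a b with h | h
  · calc a * b ≤ b * b := by gcongr
      _ ≤ a ^ 2 + b ^ 2 := by rw [sq b]; exact le_add_self
  · calc a * b ≤ a * a := by gcongr
      _ ≤ a ^ 2 + b ^ 2 := by rw [sq a]; exact le_self_add

theorem integral_vertical_line_eq {E : Type*} [NormedAddCommGroup E] [NormedSpace ℂ E]
    {D : ℂ → E} {x₁ x₂ : ℝ} (hx : x₁ ≤ x₂) (hD : DifferentiableOn ℂ D (re ⁻¹' Icc x₁ x₂))
    (hstrip : Integrable (fun p : ℝ × ℝ ↦ D (p.1 + p.2 * I))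
      ((volume.restrict (Ioc x₁ x₂)).prod volume))
    (h₁ : Integrable fun y : ℝ ↦ D (x₁ + y * I)) (h₂ : Integrable fun y : ℝ ↦ D (x₂ + y * I)) :
    ∫ y : ℝ, D (x₁ + y * I) = ∫ y : ℝ, D (x₂ + y * I) := by
  -- The horizontal sides of the rectangles are integrable in `R`, so their limit can only be zero.
  let J (R : ℝ) : E := ∫ x in x₁..x₂, D (x + R * I)
  have hJ : Integrable J := by
    simpa only [J, intervalIntegral.integral_of_le hx] using hstrip.integral_prod_right
  have hrect (R : ℝ) : J R - J (-R) =
      (I • ∫ y in -R..R, D (x₂ + y * I)) - I • ∫ y in -R..R, D (x₁ + y * I) := by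
    have := integral_boundary_rect_eq_zero_of_differentiableOn D (x₁ + (-R : ℝ) * I) (x₂ + R * I)
      (hD.mono fun z hz ↦ by simpa [uIcc_of_le hx] using hz.1)
    simp only [add_re, ofReal_re, re_ofReal_mul, I_re, mul_zero, add_zero, add_im, ofReal_im,
      im_ofReal_mul, I_im, mul_one, zero_add] at this
    rw [← sub_eq_zero, ← neg_eq_zero, ← this]
    simp only [J]
    abel
  have hlim : Tendsto (fun R ↦ J R - J (-R)) atTop
      (𝓝 ((I • ∫ y : ℝ, D (x₂ + y * I)) - I • ∫ y : ℝ, D (x₁ + y * I))) := by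
    simp only [hrect]
    have hline {x : ℝ} (h : Integrable fun y : ℝ ↦ D (x + y * I)) :=
      (intervalIntegral_tendsto_integral h tendsto_neg_atTop_atBot tendsto_id).const_smul I
    exact (hline h₂).sub (hline h₁)
  have hzero := (hJ.sub hJ.comp_neg).integrableAtFilter atTop |>.eq_zero_of_tendsto
    (fun s hs ↦ ?_) hlim
  · rw [← smul_sub, smul_eq_zero_iff_right I_ne_zero, sub_eq_zero] at hzero
    exact hzero.symm
  · obtain ⟨R, hR⟩ := mem_atTop_sets.1 hs
    exact measure_mono_top hR Real.volume_Ici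

theorem exists_forall_inner_eq_of_tendsto {𝕜 E ι : Type*} [RCLike 𝕜] [NormedAddCommGroup E]
    [InnerProductSpace 𝕜 E] [CompleteSpace E] {p : Filter ι} [p.NeBot] {v : ι → E} {C : ℝ}
    (hv : ∀ᶠ i in p, ‖v i‖ ≤ C) :
    ∃ x : E, ∀ (y : E) (z : 𝕜), Tendsto (fun i ↦ inner 𝕜 y (v i)) p (𝓝 z) → inner 𝕜 y x = z := by
  let φ (i : ι) : WeakDual 𝕜 E := StrongDual.toWeakDual (InnerProductSpace.toDual 𝕜 E (v i))
  have hφ : ∃ᶠ i in p, φ i ∈ WeakDual.toStrongDual ⁻¹' Metric.closedBall 0 C :=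
    hv.frequently.mono fun i hi ↦ by simpa [φ] using hi
  obtain ⟨ψ, -, hψ⟩ :=
    (WeakDual.isCompact_closedBall 0 C).exists_mapClusterPt_of_frequently hφ
  refine ⟨(InnerProductSpace.toDual 𝕜 E).symm (WeakDual.toStrongDual ψ), fun y z hz ↦ ?_⟩
  have hcluster : MapClusterPt (ψ y) p fun i ↦ inner 𝕜 (v i) y :=
    hψ.continuousAt_comp (WeakDual.eval_continuous y).continuousAt
  have hlim : Tendsto (fun i ↦ inner 𝕜 (v i) y) p (𝓝 (conj z)) := by
    simpa only [Function.comp_def, inner_conj_symm] using (RCLike.continuous_conj.tendsto z).comp hz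
  have hψy : ψ y = conj z := eq_of_nhds_neBot (hcluster.clusterPt.mono hlim)
  rw [← inner_conj_symm, InnerProductSpace.toDual_symm_apply]
  exact (congrArg conj hψy).trans (RCLike.conj_conj z)

/-- The restriction of `f` to the line `re w = x`, dilated by `2π` so as to match the normalisation
of the Fourier transform. -/
noncomputable def verticalSlice (f : ℂ → ℂ) (x s : ℝ) : ℂ :=
  f (x + (2 * Real.pi * s : ℝ) * I)

theorem verticalSlice_re_im (f : ℂ → ℂ) (w : ℂ) :
    verticalSlice f w.re ((2 * Real.pi)⁻¹ * w.im) = f w := by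
  rw [verticalSlice, mul_inv_cancel_left₀ (by positivity), re_add_im]

theorem lintegral_enorm_sq_eq_verticalSlice (f : ℂ → ℂ) (x : ℝ) :
    ∫⁻ y : ℝ, ‖f (x + y * I)‖ₑ ^ 2 =
      ENNReal.ofReal (2 * Real.pi) * eLpNorm (verticalSlice f x) 2 ^ 2 := by
  simp only [← lintegral_enorm_sq_eq_eLpNorm, verticalSlice]
  rw [lintegral_comp_const_mul (fun y : ℝ ↦ ‖f (x + y * I)‖ₑ ^ 2) (by positivity), ← mul_assoc,
    ← ENNReal.ofReal_mul (by positivity), abs_of_pos (by positivity),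
    mul_inv_cancel₀ (by positivity), ENNReal.ofReal_one, one_mul]

section Hardy

variable {f g : ℂ → ℂ} {x : ℝ}

/-- The supremum over `x > 0` of the `L¹` norms of `f` on the vertical lines `re w = x`. -/
noncomputable def H1norm (f : ℂ → ℂ) : ℝ≥0∞ :=
  ⨆ x ∈ Ioi (0 : ℝ), ∫⁻ y : ℝ, ‖f (x + y * I)‖ₑ

/-- Membership in the Hardy space `H¹(ℂ₊)` of the right half-plane. -/
def MemH1 (f : ℂ → ℂ) : Prop :=
  DifferentiableOn ℂ f {w : ℂ | 0 < w.re} ∧ H1norm f < ⊤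

theorem continuous_vertical_line (hf : DifferentiableOn ℂ f {w : ℂ | 0 < w.re}) (hx : 0 < x) :
    Continuous fun y : ℝ ↦ f (x + y * I) :=
  hf.continuousOn.comp_continuous (by fun_prop) fun y ↦ by simpa

theorem lintegral_vertical_line_le_H1norm (f : ℂ → ℂ) (hx : 0 < x) :
    ∫⁻ y : ℝ, ‖f (x + y * I)‖ₑ ≤ H1norm f :=
  le_iSup₂ (f := fun x (_ : x ∈ Ioi (0 : ℝ)) ↦ ∫⁻ y : ℝ, ‖f (x + y * I)‖ₑ) x hx

theorem MemH1.integrable_vertical_line (hf : MemH1 f) (hx : 0 < x) :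
    Integrable fun y : ℝ ↦ f (x + y * I) :=
  ⟨(continuous_vertical_line hf.1 hx).aestronglyMeasurable,
    (lintegral_vertical_line_le_H1norm f hx).trans_lt hf.2⟩

theorem MemH1.integrable_verticalSlice (hf : MemH1 f) (hx : 0 < x) :
    Integrable (verticalSlice f x) :=
  (hf.integrable_vertical_line hx).comp_mul_left' (by positivity)

theorem continuous_verticalSlice (hf : DifferentiableOn ℂ f {w : ℂ | 0 < w.re}) (hx : 0 < x) :
    Continuous (verticalSlice f x) :=
  (continuous_vertical_line hf hx).comp (by fun_prop)

theorem MemH1.integrable_strip (hf : MemH1 f) (hx : 0 < x) (x' : ℝ) :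
    Integrable (fun p : ℝ × ℝ ↦ f (p.1 + p.2 * I)) ((volume.restrict (Ioc x x')).prod volume) := by
  have hmeas : AEStronglyMeasurable (fun p : ℝ × ℝ ↦ f (p.1 + p.2 * I))
      ((volume.restrict (Ioc x x')).prod volume) := by
    rw [← Measure.restrict_univ (μ := (volume : Measure ℝ)), Measure.prod_restrict,
      Measure.restrict_univ]
    exact (hf.1.continuousOn.comp (by fun_prop) fun p hp ↦ by
      simpa using hx.trans hp.1.1).aestronglyMeasurable (measurableSet_Ioc.prod .univ)
  refine ⟨hmeas, ?_⟩
  calc ∫⁻ p : ℝ × ℝ, ‖f (p.1 + p.2 * I)‖ₑ ∂(volume.restrict (Ioc x x')).prod volume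
      = ∫⁻ s in Ioc x x', ∫⁻ y : ℝ, ‖f (s + y * I)‖ₑ := lintegral_prod _ hmeas.enorm
    _ ≤ ∫⁻ _ in Ioc x x', H1norm f := setLIntegral_mono' measurableSet_Ioc fun s hs ↦
        lintegral_vertical_line_le_H1norm f (hx.trans hs.1)
    _ < ⊤ := by
        rw [setLIntegral_const]
        exact ENNReal.mul_lt_top hf.2 measure_Ioc_lt_top

theorem lintegral_vertical_line_le_H2normSq (f : ℂ → ℂ) (hx : 0 < x) :
    ∫⁻ y : ℝ, ‖f (x + y * I)‖ₑ ^ 2 ≤ H2normSq f :=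
  le_iSup₂ (f := fun x (_ : x ∈ Ioi (0 : ℝ)) ↦ ∫⁻ y : ℝ, ‖f (x + y * I)‖ₑ ^ 2) x hx

theorem MemH2.memLp_verticalSlice (hf : MemH2 f) (hx : 0 < x) : MemLp (verticalSlice f x) 2 := by
  refine ⟨(continuous_verticalSlice hf.1 hx).aestronglyMeasurable, ?_⟩
  have := (lintegral_vertical_line_le_H2normSq f hx).trans_lt hf.2
  rw [lintegral_enorm_sq_eq_verticalSlice] at this
  by_contra! h
  simp [top_le_iff.1 h, Real.pi_pos, ENNReal.mul_top] at this

theorem H2normSq_mono (h : ∀ w : ℂ, 0 < w.re → ‖f w‖ ≤ ‖g w‖) :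
    H2normSq f ≤ H2normSq g :=
  iSup₂_mono fun x (hx : 0 < x) ↦ lintegral_mono fun y ↦
    pow_le_pow_left' (enorm_le_iff_norm_le.2 (h (x + y * I) (by simpa))) 2

theorem H2normSq_congr (h : EqOn f g {w | 0 < w.re}) : H2normSq f = H2normSq g :=
  (H2normSq_mono fun _ hw ↦ (congrArg norm (h hw)).le).antisymm
    (H2normSq_mono fun _ hw ↦ (congrArg norm (h hw)).ge)

theorem MemH2.congr (hf : MemH2 f) (h : EqOn g f {w | 0 < w.re}) : MemH2 g :=
  ⟨hf.1.congr h, (H2normSq_congr h).trans_lt hf.2⟩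

theorem MemH2.memH1_mul (hf : MemH2 f) (hg : MemH2 g) : MemH1 (f * g) := by
  refine ⟨hf.1.mul hg.1, (iSup₂_le fun x (hx : 0 < x) ↦ ?_).trans_lt
    (ENNReal.add_lt_top.2 ⟨hf.2, hg.2⟩)⟩
  calc ∫⁻ y : ℝ, ‖(f * g) (x + y * I)‖ₑ
      ≤ ∫⁻ y : ℝ, (‖f (x + y * I)‖ₑ ^ 2 + ‖g (x + y * I)‖ₑ ^ 2) := lintegral_mono fun y ↦ by
        rw [Pi.mul_apply, enorm_mul]
        exact ennreal_mul_le_sq_add_sq _ _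
    _ = (∫⁻ y : ℝ, ‖f (x + y * I)‖ₑ ^ 2) + ∫⁻ y : ℝ, ‖g (x + y * I)‖ₑ ^ 2 :=
        lintegral_add_left ((continuous_vertical_line hf.1 hx).enorm.measurable.pow_const 2) _
    _ ≤ H2normSq f + H2normSq g := add_le_add (lintegral_vertical_line_le_H2normSq f hx)
        (lintegral_vertical_line_le_H2normSq g hx)

end Hardy

/-- The Laplace transform `w ↦ ∫₀^∞ e^{-wu} v(u) du` of a function on the half-line; on
`L²(0, ∞)` it is, up to the factor `√(2π)`, the Paley–Wiener isometry onto `H²(ℂ₊)`. -/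
noncomputable def laplace (v : ℝ → ℂ) (w : ℂ) : ℂ :=
  ∫ u in Ioi (0 : ℝ), cexp (-(w * u)) * v u

/-- `L²(0, ∞)`, the domain of the Laplace transform. -/
abbrev HalfLineL2 : Type := Lp ℂ 2 (volume.restrict (Ioi (0 : ℝ)))

section Laplace

variable {v : ℝ → ℂ} {w l : ℂ}

theorem norm_cexp_neg_mul_ofReal (w : ℂ) (u : ℝ) : ‖cexp (-(w * u))‖ = Real.exp (-w.re * u) := by
  simp [Complex.norm_exp]

theorem norm_cexp_neg_mul_ofReal_mul_le (hw : 0 ≤ w.re) {u : ℝ} (hu : 0 ≤ u) (z : ℂ) :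
    ‖cexp (-(w * u)) * z‖ ≤ ‖z‖ := by
  rw [norm_mul, norm_cexp_neg_mul_ofReal]
  exact mul_le_of_le_one_left (norm_nonneg z) (Real.exp_le_one_iff.2 (by nlinarith))

theorem memLp_cexp_neg_mul (hw : 0 < w.re) :
    MemLp (fun u : ℝ ↦ cexp (-(w * u))) 2 (volume.restrict (Ioi 0)) := by
  refine (memLp_two_iff_integrable_sq_norm (by fun_prop)).2 ?_
  have h (u : ℝ) : ‖cexp (-(w * u))‖ ^ 2 = Real.exp (-(2 * w.re) * u) := by
    rw [norm_cexp_neg_mul_ofReal, ← Real.exp_nat_mul]; congr 1; push_cast; ring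
  simp only [h]
  exact exp_neg_integrableOn_Ioi 0 (by positivity)

/-- The class of `u ↦ e^{-lu}` in `L²(0, ∞)`, the Laplace preimage of the kernel `1/(w + l)`. -/
noncomputable def expL2 (l : ℂ) (hl : 0 < l.re) : HalfLineL2 :=
  (memLp_cexp_neg_mul hl).toLp _

theorem integrableOn_laplace (hv : MemLp v 2 (volume.restrict (Ioi 0))) (hw : 0 < w.re) :
    IntegrableOn (fun u : ℝ ↦ cexp (-(w * u)) * v u) (Ioi 0) :=
  (memLp_cexp_neg_mul hw).integrable_mul hv

theorem laplace_congr_ae {v₁ v₂ : ℝ → ℂ} (h : v₁ =ᵐ[volume.restrict (Ioi 0)] v₂) :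
    laplace v₁ = laplace v₂ :=
  funext fun w ↦ integral_congr_ae <| h.mono fun u hu ↦ by simp only [hu]

theorem laplace_cexp_mul (v : ℝ → ℂ) (w l : ℂ) :
    laplace (fun u ↦ cexp (-(l * u)) * v u) w = laplace v (w + l) := by
  simp only [laplace, ← mul_assoc, ← Complex.exp_add, ← neg_add, ← add_mul]

theorem laplace_expL2 (hl : 0 < l.re) (hw : 0 < w.re) : laplace (expL2 l hl) w = (w + l)⁻¹ := by
  rw [expL2, laplace_congr_ae (MemLp.coeFn_toLp _), laplace]
  have h : (-(w + l)).re < 0 := by simp; linarith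
  simp only [← Complex.exp_add]
  convert integral_exp_mul_complex_Ioi h 0 using 3
  · ring_nf
  · rw [ofReal_zero, mul_zero, Complex.exp_zero, neg_div_neg_eq, one_div]

theorem inner_expL2 (hl : 0 < l.re) (v : HalfLineL2) :
    inner ℂ (expL2 l hl) v = laplace v (conj l) := by
  rw [L2.inner_def]
  refine integral_congr_ae <| (memLp_cexp_neg_mul hl).coeFn_toLp.mono fun u hu ↦ ?_
  simp only [expL2, hu, RCLike.inner_apply, ← exp_conj, map_neg, map_mul, conj_ofReal, mul_comm]

theorem laplace_eq_inner {w : ℂ} (hw : 0 < w.re) (v : HalfLineL2) :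
    laplace v w = inner ℂ (expL2 (conj w) (by simpa)) v := by
  rw [inner_expL2, conj_conj]

theorem laplace_add (v₁ v₂ : HalfLineL2) :
    EqOn (laplace (v₁ + v₂ : HalfLineL2)) (laplace v₁ + laplace v₂) {w | 0 < w.re} :=
  fun w (hw : 0 < w.re) ↦ by
    rw [Pi.add_apply, laplace_eq_inner hw, laplace_eq_inner hw, laplace_eq_inner hw,
      inner_add_right]

theorem laplace_smul (c : ℂ) (v : HalfLineL2) :
    EqOn (laplace (c • v : HalfLineL2)) (c • laplace v) {w | 0 < w.re} := fun w (hw : 0 < w.re) ↦ by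
  rw [Pi.smul_apply, laplace_eq_inner hw, laplace_eq_inner hw, inner_smul_right, smul_eq_mul]

theorem verticalSlice_laplace (v : ℝ → ℂ) (x : ℝ) :
    verticalSlice (laplace v) x =
      𝓕 ((Ioi 0).indicator fun u : ℝ ↦ cexp (-(x * u)) * v u) := by
  ext s
  rw [Real.fourier_eq', verticalSlice, laplace, ← integral_indicator measurableSet_Ioi]
  refine integral_congr_ae (.of_forall fun u ↦ ?_)
  by_cases hu : u ∈ Ioi 0
  · simp only [indicator_of_mem hu, smul_eq_mul, ← mul_assoc, ← Complex.exp_add]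
    congr 2
    simp only [ofReal_mul, ofReal_ofNat, neg_mul, RCLike.inner_apply, Real.ringHom_apply,
      ofReal_neg]
    ring
  · simp only [indicator_of_notMem hu, smul_zero]

theorem lintegral_enorm_sq_laplace (hv : MemLp v 2 (volume.restrict (Ioi 0))) {x : ℝ} (hx : 0 < x) :
    ∫⁻ y : ℝ, ‖laplace v (x + y * I)‖ₑ ^ 2 =
      ENNReal.ofReal (2 * Real.pi) *
        ∫⁻ u in Ioi (0 : ℝ), ‖cexp (-(x * u)) * v u‖ₑ ^ 2 := by
  have hint : IntegrableOn (fun u : ℝ ↦ cexp (-(x * u)) * v u) (Ioi 0) :=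
    integrableOn_laplace hv (by simpa)
  have hmem : MemLp (fun u : ℝ ↦ cexp (-(x * u)) * v u) 2 (volume.restrict (Ioi 0)) :=
    hv.of_le hint.aestronglyMeasurable <| (ae_restrict_iff' measurableSet_Ioi).2 <|
      .of_forall fun u hu ↦ norm_cexp_neg_mul_ofReal_mul_le (by simpa using hx.le) hu.out.le _
  rw [lintegral_enorm_sq_eq_verticalSlice, verticalSlice_laplace,
    eLpNorm_fourier (hint.integrable_indicator measurableSet_Ioi)
      ((memLp_indicator_iff_restrict measurableSet_Ioi).2 hmem),
    eLpNorm_indicator_eq_eLpNorm_restrict measurableSet_Ioi, lintegral_enorm_sq_eq_eLpNorm]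

theorem ofReal_two_pi_mul_norm_sq (v : HalfLineL2) : ENNReal.ofReal (2 * Real.pi * ‖v‖ ^ 2) =
    ENNReal.ofReal (2 * Real.pi) * eLpNorm v 2 (volume.restrict (Ioi 0)) ^ 2 := by
  rw [← Lp.enorm_def, ENNReal.ofReal_mul (by positivity), ENNReal.ofReal_pow (norm_nonneg v),
    ofReal_norm]

theorem H2normSq_laplace_le (v : HalfLineL2) :
    H2normSq (laplace v) ≤ ENNReal.ofReal (2 * Real.pi * ‖v‖ ^ 2) := by
  refine iSup₂_le fun x (hx : 0 < x) ↦ ?_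
  calc ∫⁻ y : ℝ, ‖laplace v (x + y * I)‖ₑ ^ 2
      = ENNReal.ofReal (2 * Real.pi) * ∫⁻ u in Ioi (0 : ℝ), ‖cexp (-(x * u)) * v u‖ₑ ^ 2 :=
        lintegral_enorm_sq_laplace (Lp.memLp v) hx
    _ ≤ ENNReal.ofReal (2 * Real.pi) * ∫⁻ u in Ioi (0 : ℝ), ‖v u‖ₑ ^ 2 := by
        refine mul_le_mul_right ?_ _
        refine setLIntegral_mono' measurableSet_Ioi fun u hu ↦ ?_
        have := norm_cexp_neg_mul_ofReal_mul_le (w := x) (by simpa using hx.le) hu.out.le (v u)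
        exact pow_le_pow_left' (enorm_le_iff_norm_le.2 this) 2
    _ = ENNReal.ofReal (2 * Real.pi * ‖v‖ ^ 2) := by
        rw [lintegral_enorm_sq_eq_eLpNorm, ofReal_two_pi_mul_norm_sq]

theorem norm_mul_cexp_neg_mul_le {r : ℝ} (hr : 0 < r) {u : ℝ} (hu : 0 ≤ u) (hw : 2 * r ≤ w.re)
    (z : ℂ) : ‖-u * (cexp (-(w * u)) * z)‖ ≤ r⁻¹ * ‖cexp (-(r * u)) * z‖ := by
  have hu' : u ≤ r⁻¹ * Real.exp (r * u) := by
    rw [inv_mul_eq_div, le_div_iff₀ hr]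
    linarith [Real.add_one_le_exp (r * u)]
  simp only [norm_mul, norm_neg, norm_cexp_neg_mul_ofReal, norm_real, Real.norm_of_nonneg hu,
    ofReal_re, ← mul_assoc]
  refine mul_le_mul_of_nonneg_right ?_ (norm_nonneg z)
  calc u * Real.exp (-w.re * u)
      ≤ r⁻¹ * Real.exp (r * u) * Real.exp (-(2 * r) * u) := by gcongr
    _ = r⁻¹ * Real.exp (-r * u) := by rw [mul_assoc, ← Real.exp_add]; ring_nf

theorem hasDerivAt_laplace (hv : MemLp v 2 (volume.restrict (Ioi 0))) (hw : 0 < w.re) :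
    HasDerivAt (laplace v) (∫ u in Ioi (0 : ℝ), -u * (cexp (-(w * u)) * v u)) w := by
  obtain ⟨r, hr, hrw⟩ : ∃ r : ℝ, 0 < r ∧ 2 * r < w.re := ⟨w.re / 3, by positivity, by linarith⟩
  have hmeas (z : ℂ) : AEStronglyMeasurable (fun u : ℝ ↦ cexp (-(z * u)) * v u)
      (volume.restrict (Ioi 0)) :=
    (by fun_prop : Continuous fun u : ℝ ↦ cexp (-(z * u))).aestronglyMeasurable.mul
      hv.aestronglyMeasurable
  have hbound : ∀ᵐ u : ℝ ∂volume.restrict (Ioi 0), ∀ z ∈ {z : ℂ | 2 * r < z.re},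
      ‖-u * (cexp (-(z * u)) * v u)‖ ≤ r⁻¹ * ‖cexp (-(r * u)) * v u‖ :=
    (ae_restrict_iff' measurableSet_Ioi).2 <| .of_forall fun u (hu : 0 < u) z (hz : 2 * r < z.re) ↦
      norm_mul_cexp_neg_mul_le hr hu.le hz.le (v u)
  have hderiv (u : ℝ) (z : ℂ) :
      HasDerivAt (fun z ↦ cexp (-(z * u)) * v u) (-u * (cexp (-(z * u)) * v u)) z :=
    ((hasDerivAt_mul_const (u : ℂ)).fun_neg.cexp.mul_const (v u)).congr_deriv (by ring)
  exact (hasDerivAt_integral_of_dominated_loc_of_deriv_le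
    ((isOpen_lt continuous_const continuous_re).mem_nhds hrw) (.of_forall hmeas)
    (integrableOn_laplace hv hw)
    ((by fun_prop : Continuous fun u : ℝ ↦ (-u : ℂ)).aestronglyMeasurable.mul (hmeas w)) hbound
    ((integrableOn_laplace hv (w := r) (by simpa)).norm.const_mul r⁻¹)
    (.of_forall fun u z _ ↦ hderiv u z)).2

theorem differentiableOn_laplace (hv : MemLp v 2 (volume.restrict (Ioi 0))) :
    DifferentiableOn ℂ (laplace v) {w | 0 < w.re} := fun _ hw ↦
  (hasDerivAt_laplace hv hw).differentiableAt.differentiableWithinAt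

theorem memH2_laplace (v : HalfLineL2) : MemH2 (laplace v) :=
  ⟨differentiableOn_laplace (Lp.memLp v), (H2normSq_laplace_le v).trans_lt ENNReal.ofReal_lt_top⟩

theorem eq_zero_of_laplace_eq_zero {v : HalfLineL2} (h : ∀ w : ℂ, 0 < w.re → laplace v w = 0) :
    v = 0 := by
  have hline : ∫⁻ u in Ioi (0 : ℝ), ‖cexp (-((1 : ℝ) * u)) * v u‖ₑ ^ 2 = 0 := by
    have := lintegral_enorm_sq_laplace (Lp.memLp v) one_pos
    simp only [fun y : ℝ ↦ h ((1 : ℝ) + y * I) (by simp), enorm_zero, ne_eq, OfNat.ofNat_ne_zero,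
      not_false_eq_true, zero_pow, lintegral_zero] at this
    exact (mul_eq_zero.1 this.symm).resolve_left (by simp [Real.pi_pos])
  have hmeas : AEMeasurable (fun u : ℝ ↦ ‖cexp (-((1 : ℝ) * u)) * v u‖ₑ ^ 2)
      (volume.restrict (Ioi 0)) :=
    (integrableOn_laplace (w := (1 : ℝ)) (Lp.memLp v)
      (by simp)).aestronglyMeasurable.enorm.pow_const 2
  refine (Lp.eq_zero_iff_ae_eq_zero).2 (((lintegral_eq_zero_iff' hmeas).1 hline).mono fun u hu ↦ ?_)
  simpa using hu

theorem topologicalClosure_span_expL2 {ι : Type*} {p : Filter ι} [p.NeBot] {l : ι → ℂ} {c : ℂ}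
    (hl : ∀ i, 0 < (l i).re) (hc : 0 < c.re) (hlc : Tendsto l p (𝓝[≠] c)) :
    (Submodule.span ℂ (range fun i ↦ expL2 (l i) (hl i))).topologicalClosure = ⊤ := by
  refine Submodule.topologicalClosure_eq_top_iff.2 ((Submodule.eq_bot_iff _).2 fun v hv ↦ ?_)
  have hzero (i : ι) : laplace v (conj (l i)) = 0 := by
    rw [← inner_expL2 (hl i)]
    exact (Submodule.mem_orthogonal _ v).1 hv _ (Submodule.subset_span (mem_range_self i))
  have hconj : Tendsto (fun i ↦ conj (l i)) p (𝓝[≠] (conj c)) :=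
    (continuous_conj.continuousAt.continuousWithinAt.tendsto_nhdsWithin fun _ hz ↦
      (starRingEnd ℂ).injective.ne hz).comp hlc
  have hanalytic : AnalyticOnNhd ℂ (laplace v) {w | 0 < w.re} :=
    (differentiableOn_laplace (Lp.memLp v)).analyticOnNhd (isOpen_lt continuous_const continuous_re)
  exact eq_zero_of_laplace_eq_zero <| hanalytic.eqOn_zero_of_preconnected_of_frequently_eq_zero
    (convex_halfSpace_re_gt 0).isPreconnected (by simpa using hc)
    (hconj.frequently (.of_forall hzero))

end Laplace

/-- The inverse Laplace transform of `q`, as an integral along the line `re z = x`. -/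
noncomputable def bromwichIntegral (q : ℂ → ℂ) (x u : ℝ) : ℂ :=
  (2 * Real.pi)⁻¹ • ∫ y : ℝ, cexp ((x + y * I) * u) * q (x + y * I)

section Bromwich

variable {q : ℂ → ℂ} {x : ℝ}

theorem norm_cexp_line_mul_ofReal (x y u : ℝ) : ‖cexp ((x + y * I) * u)‖ = Real.exp (x * u) := by
  simp [Complex.norm_exp]

theorem MemH1.norm_bromwichIntegral_le (hq : MemH1 q) (hx : 0 < x) (u : ℝ) :
    ‖bromwichIntegral q x u‖ ≤ (2 * Real.pi)⁻¹ * (H1norm q).toReal * Real.exp (x * u) := by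
  have hint : ∫ y : ℝ, ‖q (x + y * I)‖ ≤ (H1norm q).toReal := by
    rw [integral_norm_eq_lintegral_enorm (hq.integrable_vertical_line hx).aestronglyMeasurable]
    exact ENNReal.toReal_mono hq.2.ne (lintegral_vertical_line_le_H1norm q hx)
  calc ‖bromwichIntegral q x u‖
      ≤ (2 * Real.pi)⁻¹ * ∫ y : ℝ, ‖cexp ((x + y * I) * u) * q (x + y * I)‖ := by
        rw [bromwichIntegral, norm_smul, Real.norm_of_nonneg (by positivity)]
        gcongr
        exact norm_integral_le_integral_norm _
    _ = (2 * Real.pi)⁻¹ * (∫ y : ℝ, ‖q (x + y * I)‖) * Real.exp (x * u) := by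
        simp only [norm_mul, norm_cexp_line_mul_ofReal, integral_const_mul]
        ring
    _ ≤ (2 * Real.pi)⁻¹ * (H1norm q).toReal * Real.exp (x * u) := by gcongr

theorem MemH1.bromwichIntegral_eq_of_le (hq : MemH1 q) (hx : 0 < x) {x' : ℝ} (hxx' : x ≤ x')
    (u : ℝ) : bromwichIntegral q x u = bromwichIntegral q x' u := by
  have hline {s : ℝ} (hs : 0 < s) :
      Integrable fun y : ℝ ↦ cexp ((s + y * I) * u) * q (s + y * I) :=
    (hq.integrable_vertical_line hs).bdd_mul (c := Real.exp (s * u)) (by fun_prop)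
      (.of_forall fun y ↦ (norm_cexp_line_mul_ofReal s y u).le)
  have hstrip : Integrable (fun p : ℝ × ℝ ↦ cexp ((p.1 + p.2 * I) * u) * q (p.1 + p.2 * I))
      ((volume.restrict (Ioc x x')).prod volume) := by
    refine (hq.integrable_strip hx x').bdd_mul (c := Real.exp (x' * |u|)) (by fun_prop) ?_
    have hmem : ∀ᵐ p : ℝ × ℝ ∂(volume.restrict (Ioc x x')).prod volume, p.1 ∈ Ioc x x' :=
      Measure.quasiMeasurePreserving_fst.ae (ae_restrict_mem measurableSet_Ioc)
    filter_upwards [hmem] with p hp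
    rw [norm_cexp_line_mul_ofReal, Real.exp_le_exp]
    have := hx.trans hp.1
    calc p.1 * u ≤ p.1 * |u| := by gcongr; exact le_abs_self u
      _ ≤ x' * |u| := by gcongr; exact hp.2
  rw [bromwichIntegral, bromwichIntegral,
    integral_vertical_line_eq (D := fun z ↦ cexp (z * u) * q z) hxx'
      ((by fun_prop : Differentiable ℂ fun z ↦ cexp (z * u)).differentiableOn.mul
        (hq.1.mono fun z hz ↦ hx.trans_le hz.1)) hstrip (hline hx)
      (hline (hx.trans_le hxx'))]

theorem MemH1.bromwichIntegral_eq (hq : MemH1 q) (hx : 0 < x) {x' : ℝ} (hx' : 0 < x') :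
    bromwichIntegral q x = bromwichIntegral q x' :=
  funext fun u ↦ (le_total x x').elim (hq.bromwichIntegral_eq_of_le hx · u)
    fun h ↦ (hq.bromwichIntegral_eq_of_le hx' h u).symm

theorem MemH1.bromwichIntegral_of_neg (hq : MemH1 q) (hx : 0 < x) {u : ℝ} (hu : u < 0) :
    bromwichIntegral q x u = 0 := by
  have hexp : Tendsto (fun s : ℝ ↦ Real.exp (s * u)) atTop (𝓝 0) :=
    Real.tendsto_exp_atBot.comp (tendsto_id.atTop_mul_const_of_neg hu)
  have hlim : Tendsto (fun s : ℝ ↦ (2 * Real.pi)⁻¹ * (H1norm q).toReal * Real.exp (s * u)) atTop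
      (𝓝 0) := by
    simpa only [mul_zero] using hexp.const_mul ((2 * Real.pi)⁻¹ * (H1norm q).toReal)
  refine norm_le_zero_iff.1 (ge_of_tendsto hlim ?_)
  filter_upwards [eventually_gt_atTop 0] with s hs
  rw [hq.bromwichIntegral_eq hx hs]
  exact hq.norm_bromwichIntegral_le hs u

theorem cexp_mul_bromwichIntegral (q : ℂ → ℂ) (x u : ℝ) :
    cexp (-(x * u)) * bromwichIntegral q x u = 𝓕⁻ (verticalSlice q x) u := by
  have hscale := Measure.integral_comp_mul_left
    (fun y : ℝ ↦ cexp (-(x * u)) * (cexp ((x + y * I) * u) * q (x + y * I))) (2 * Real.pi)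
  rw [abs_of_pos (by positivity)] at hscale
  rw [bromwichIntegral, mul_smul_comm, ← integral_const_mul, ← hscale, Real.fourierInv_eq']
  congr with s
  rw [verticalSlice, smul_eq_mul, ← mul_assoc, ← Complex.exp_add]
  congr 2
  simp only [ofReal_mul, ofReal_ofNat, RCLike.inner_apply, Real.ringHom_apply]
  ring

/-- `bromwichIntegral q x` does not depend on `x`, so halving the abscissa leaves the factor
`e^{-xu/2}` that makes the Fourier inverse of `q` on the line integrable. -/
theorem MemH1.norm_cexp_mul_bromwichIntegral_le (hq : MemH1 q) (hx : 0 < x) (u : ℝ) :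
    ‖cexp (-(x * u)) * bromwichIntegral q x u‖ ≤
      (2 * Real.pi)⁻¹ * (H1norm q).toReal * Real.exp (-(x / 2) * u) := by
  rw [norm_mul, norm_cexp_neg_mul_ofReal, hq.bromwichIntegral_eq hx (half_pos hx), ofReal_re]
  calc Real.exp (-x * u) * ‖bromwichIntegral q (x / 2) u‖
      ≤ Real.exp (-x * u) * ((2 * Real.pi)⁻¹ * (H1norm q).toReal * Real.exp (x / 2 * u)) := by
        gcongr
        exact hq.norm_bromwichIntegral_le (half_pos hx) u
    _ = (2 * Real.pi)⁻¹ * (H1norm q).toReal * Real.exp (-(x / 2) * u) := by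
        rw [mul_left_comm, ← Real.exp_add]
        ring_nf

theorem MemH1.fourierInv_verticalSlice_ae_eq (hq : MemH1 q) (hx : 0 < x) :
    𝓕⁻ (verticalSlice q x) =ᵐ[volume]
      (Ioi 0).indicator fun u : ℝ ↦ cexp (-(x * u)) * bromwichIntegral q x u := by
  filter_upwards [Measure.ae_ne volume 0] with u hu
  rw [← cexp_mul_bromwichIntegral]
  rcases hu.lt_or_gt with hu | hu
  · rw [hq.bromwichIntegral_of_neg hx hu, mul_zero, indicator_of_notMem (by simpa using hu.le)]
  · rw [indicator_of_mem (by exact hu)]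

theorem MemH1.integrable_fourierInv_verticalSlice (hq : MemH1 q) (hx : 0 < x) :
    Integrable (𝓕⁻ (verticalSlice q x)) := by
  have hexp : IntegrableOn (fun u : ℝ ↦ (2 * Real.pi)⁻¹ * (H1norm q).toReal *
      Real.exp (-(x / 2) * u)) (Ioi 0) := (exp_neg_integrableOn_Ioi 0 (half_pos hx)).const_mul _
  refine (hexp.integrable_indicator measurableSet_Ioi).mono' (continuous_fourierInv_of_integrable
    (hq.integrable_verticalSlice hx)).aestronglyMeasurable ?_
  filter_upwards [hq.fourierInv_verticalSlice_ae_eq hx] with u hu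
  rw [hu, norm_indicator_eq_indicator_norm]
  exact indicator_le_indicator (hq.norm_cexp_mul_bromwichIntegral_le hx u)

theorem MemH1.laplace_bromwichIntegral (hq : MemH1 q) (hx : 0 < x) {w : ℂ} (hw : 0 < w.re) :
    laplace (bromwichIntegral q x) w = q w := by
  have hfourier : Integrable (𝓕 (verticalSlice q w.re)) := by
    simpa only [Real.fourierInv_eq_fourier_neg, neg_neg] using
      (hq.integrable_fourierInv_verticalSlice hw).comp_neg
  rw [hq.bromwichIntegral_eq hx hw, ← verticalSlice_re_im (laplace _), ← verticalSlice_re_im q,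
    verticalSlice_laplace, ← Real.fourier_congr_ae (hq.fourierInv_verticalSlice_ae_eq hw),
    (continuous_verticalSlice hq.1 hw).fourier_fourierInv_eq (hq.integrable_verticalSlice hw)
      hfourier]

theorem MemH1.exists_laplace_eq_add (hq : MemH1 q) (hq₂ : MemH2 q) {δ : ℝ} (hδ : 0 < δ) :
    ∃ v : HalfLineL2, ENNReal.ofReal (2 * Real.pi * ‖v‖ ^ 2) ≤ H2normSq q ∧
      ∀ w : ℂ, 0 < w.re → laplace v w = q (w + δ) := by
  set ψ : ℝ → ℂ := fun u ↦ cexp (-(δ * u)) * bromwichIntegral q δ u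
  have hslice := hq₂.memLp_verticalSlice hδ
  have hplancherel : eLpNorm ψ 2 (volume.restrict (Ioi 0)) = eLpNorm (verticalSlice q δ) 2 := by
    rw [← eLpNorm_indicator_eq_eLpNorm_restrict measurableSet_Ioi,
      ← eLpNorm_congr_ae (hq.fourierInv_verticalSlice_ae_eq hδ),
      eLpNorm_fourierInv (hq.integrable_verticalSlice hδ) hslice]
  have hmem : MemLp ψ 2 (volume.restrict (Ioi 0)) := by
    refine ⟨?_, hplancherel.trans_lt hslice.2⟩
    exact ((aestronglyMeasurable_indicator_iff measurableSet_Ioi).1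
      ((hq.integrable_fourierInv_verticalSlice hδ).congr
        (hq.fourierInv_verticalSlice_ae_eq hδ)).aestronglyMeasurable)
  refine ⟨hmem.toLp ψ, ?_, fun w hw ↦ ?_⟩
  · rw [ofReal_two_pi_mul_norm_sq, eLpNorm_congr_ae hmem.coeFn_toLp, hplancherel,
      ← lintegral_enorm_sq_eq_verticalSlice]
    exact lintegral_vertical_line_le_H2normSq q hδ
  · rw [laplace_congr_ae hmem.coeFn_toLp, laplace_cexp_mul,
      hq.laplace_bromwichIntegral hδ (by simpa using add_pos hw hδ)]

end Bromwich

theorem memH2_inv_add {l : ℂ} (hl : 0 < l.re) : MemH2 fun w ↦ (w + l)⁻¹ :=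
  (memH2_laplace (expL2 l hl)).congr fun _ hw ↦ (laplace_expL2 hl hw).symm

theorem memH2_inv_one_add_mul {δ : ℝ} (hδ : 0 < δ) : MemH2 fun w ↦ (1 + δ * w)⁻¹ := by
  have hδ' : 0 < (δ⁻¹ : ℂ).re := by simpa [← ofReal_inv]
  refine (memH2_laplace ((δ⁻¹ : ℂ) • expL2 δ⁻¹ hδ')).congr fun w hw ↦ ?_
  have hδ0 : (δ : ℂ) ≠ 0 := by exact_mod_cast hδ.ne'
  rw [laplace_smul _ _ hw, Pi.smul_apply, laplace_expL2 hδ' hw, smul_eq_mul, ← mul_inv, mul_add,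
    mul_inv_cancel₀ hδ0, add_comm]

theorem norm_inv_one_add_mul_le {δ : ℝ} (hδ : 0 < δ) {w : ℂ} (hw : 0 < w.re) :
    ‖(1 + δ * w)⁻¹‖ ≤ 1 := by
  rw [norm_inv]
  refine inv_le_one_of_one_le₀ (le_trans ?_ (re_le_norm _))
  simpa using (mul_pos hδ hw).le

theorem MemH2.exists_laplace_eq_damped {g : ℂ → ℂ} (hg : MemH2 g) {δ : ℝ} (hδ : 0 < δ) :
    ∃ v : HalfLineL2, ENNReal.ofReal (2 * Real.pi * ‖v‖ ^ 2) ≤ H2normSq g ∧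
      ∀ w : ℂ, 0 < w.re → laplace v w = g (w + δ) * (1 + δ * (w + δ))⁻¹ := by
  set q : ℂ → ℂ := g * fun w : ℂ ↦ (1 + δ * w)⁻¹ with hq_def
  have hle : H2normSq q ≤ H2normSq g := H2normSq_mono fun w hw ↦ by
    rw [hq_def, Pi.mul_apply, norm_mul]
    exact mul_le_of_le_one_right (norm_nonneg _) (norm_inv_one_add_mul_le hδ hw)
  have hq : MemH1 q := hg.memH1_mul (memH2_inv_one_add_mul hδ)
  obtain ⟨v, hv, hvq⟩ := hq.exists_laplace_eq_add ⟨hq.1, hle.trans_lt hg.2⟩ hδ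
  exact ⟨v, hv.trans hle, hvq⟩

theorem MemH2.exists_eqOn_laplace {g : ℂ → ℂ} (hg : MemH2 g) :
    ∃ v : HalfLineL2, EqOn g (laplace v) {w | 0 < w.re} := by
  choose! v hv_norm hv_laplace using fun δ (hδ : 0 < δ) ↦ hg.exists_laplace_eq_damped hδ
  have hbound : ∀ᶠ δ in 𝓝[>] (0 : ℝ), ‖v δ‖ ≤ √((H2normSq g).toReal / (2 * Real.pi)) := by
    filter_upwards [self_mem_nhdsWithin] with δ hδ
    refine Real.le_sqrt_of_sq_le ?_
    rw [le_div_iff₀' (by positivity)]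
    exact (ENNReal.ofReal_le_iff_le_toReal hg.2.ne).1 (hv_norm δ hδ)
  obtain ⟨x, hx⟩ := exists_forall_inner_eq_of_tendsto (𝕜 := ℂ) hbound
  refine ⟨x, fun w (hw : 0 < w.re) ↦ ?_⟩
  rw [laplace_eq_inner hw]
  refine (hx _ _ ?_).symm
  have hcont : ContinuousAt (fun δ : ℝ ↦ g (w + δ) * (1 + δ * (w + δ))⁻¹) 0 := by
    have hgw : ContinuousAt g (w + (0 : ℝ)) := by
      simpa using hg.1.continuousOn.continuousAt
        ((isOpen_lt continuous_const continuous_re).mem_nhds hw)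
    exact (hgw.comp (f := fun δ : ℝ ↦ w + δ) (by fun_prop)).mul
      (ContinuousAt.inv₀ (by fun_prop) (by simp))
  have hlim := hcont.tendsto.mono_left (nhdsWithin_le_nhds (s := Ioi 0))
  simp only [ofReal_zero, add_zero, zero_mul, inv_one, mul_one] at hlim
  refine hlim.congr' ?_
  filter_upwards [self_mem_nhdsWithin] with δ hδ
  rw [← hv_laplace δ hδ w hw, laplace_eq_inner hw]

theorem exists_mem_span_eqOn_laplace {ι : Type*} {l : ι → ℂ} (hl : ∀ i, 0 < (l i).re)
    {q : HalfLineL2} (hq : q ∈ Submodule.span ℂ (range fun i ↦ expL2 (l i) (hl i))) :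
    ∃ h ∈ Submodule.span ℂ (range fun i w ↦ (w + l i)⁻¹), EqOn h (laplace q) {w | 0 < w.re} := by
  induction hq using Submodule.span_induction with
  | mem _ hx =>
    obtain ⟨i, rfl⟩ := hx
    exact ⟨_, Submodule.subset_span ⟨i, rfl⟩, fun w hw ↦ (laplace_expL2 (hl i) hw).symm⟩
  | zero =>
    exact ⟨0, zero_mem _, fun w (hw : 0 < w.re) ↦ by
      rw [laplace_eq_inner hw, inner_zero_right, Pi.zero_apply]⟩
  | add q₁ q₂ _ _ h₁ h₂ =>
    obtain ⟨h₁, hs₁, he₁⟩ := h₁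
    obtain ⟨h₂, hs₂, he₂⟩ := h₂
    exact ⟨h₁ + h₂, add_mem hs₁ hs₂, fun w hw ↦ by
      rw [laplace_add q₁ q₂ hw, Pi.add_apply, Pi.add_apply, he₁ hw, he₂ hw]⟩
  | smul c q _ h =>
    obtain ⟨h, hs, he⟩ := h
    exact ⟨c • h, Submodule.smul_mem _ c hs, fun w hw ↦ by
      rw [laplace_smul c q hw, Pi.smul_apply, Pi.smul_apply, he hw]⟩

theorem MemH2.exists_mem_span_inv_add_H2normSq_sub_lt {ι : Type*} {p : Filter ι} [p.NeBot]
    {l : ι → ℂ} {c : ℂ} (hl : ∀ i, 0 < (l i).re) (hc : 0 < c.re) (hlc : Tendsto l p (𝓝[≠] c))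
    {g : ℂ → ℂ} (hg : MemH2 g) {ε : ℝ} (hε : 0 < ε) :
    ∃ h ∈ Submodule.span ℂ (range fun i w ↦ (w + l i)⁻¹),
      H2normSq (g - h) < ENNReal.ofReal ε ^ 2 := by
  obtain ⟨v, hv⟩ := hg.exists_eqOn_laplace
  have hdense : Dense (Submodule.span ℂ (range fun i ↦ expL2 (l i) (hl i)) : Set HalfLineL2) :=
    Submodule.dense_iff_topologicalClosure_eq_top.2 (topologicalClosure_span_expL2 hl hc hlc)
  obtain ⟨q, hq, hvq⟩ := hdense.exists_dist_lt v (ε := ε / 4) (by positivity)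
  obtain ⟨h, hh, hhq⟩ := exists_mem_span_eqOn_laplace hl hq
  refine ⟨h, hh, ?_⟩
  have hsub : EqOn (g - h) (laplace (v - q : HalfLineL2)) {w | 0 < w.re} :=
      fun w (hw : 0 < w.re) ↦ by
    rw [Pi.sub_apply, hv hw, hhq hw, laplace_eq_inner hw, laplace_eq_inner hw, laplace_eq_inner hw,
      inner_sub_right]
  calc H2normSq (g - h) = H2normSq (laplace (v - q : HalfLineL2)) := H2normSq_congr hsub
    _ ≤ ENNReal.ofReal (2 * Real.pi * ‖v - q‖ ^ 2) := H2normSq_laplace_le _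
    _ < ENNReal.ofReal (ε ^ 2) := by
        rw [ENNReal.ofReal_lt_ofReal_iff (by positivity)]
        rw [dist_eq_norm] at hvq
        calc 2 * Real.pi * ‖v - q‖ ^ 2 ≤ 2 * 4 * (ε / 4) ^ 2 := by
              gcongr
              exact Real.pi_le_four
          _ < ε ^ 2 := by nlinarith [pow_pos hε 2]
    _ = ENNReal.ofReal ε ^ 2 := ENNReal.ofReal_pow hε.le 2

theorem iterate_affine {K : Type*} [Field K] {a b : K} (ha : a ≠ 1) {φ : K → K}
    (hφ : ∀ w, φ w = a * w + b) (n : ℕ) (w : K) :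
    φ^[n] w = a ^ n * (w + b / (a - 1)) - b / (a - 1) := by
  have ha' := sub_ne_zero.2 ha
  induction n with
  | zero => simp
  | succ n ih =>
    rw [Function.iterate_succ_apply', ih, hφ]
    field_simp
    ring

theorem inv_add_eq_smul_comp_iterate_affine {K : Type*} [Field K] {a b : K} (ha₀ : a ≠ 0)
    (ha₁ : a ≠ 1) {φ : K → K} (hφ : ∀ w, φ w = a * w + b) (n : ℕ) :
    (fun w ↦ (w + (b / (a - 1) + (a ^ n)⁻¹))⁻¹) =
      a ^ n • ((fun w ↦ (w + (b / (a - 1) + 1))⁻¹) ∘ φ^[n]) := by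
  ext w
  have han : a ^ n ≠ 0 := pow_ne_zero n ha₀
  calc (w + (b / (a - 1) + (a ^ n)⁻¹))⁻¹
      = ((a ^ n)⁻¹ * (a ^ n * (w + b / (a - 1)) + 1))⁻¹ := by
        rw [mul_add, inv_mul_cancel_left₀ han, mul_one, add_assoc]
    _ = a ^ n * (a ^ n * (w + b / (a - 1)) + 1)⁻¹ := by rw [mul_inv, inv_inv]
    _ = a ^ n * (φ^[n] w + (b / (a - 1) + 1))⁻¹ := by
        rw [iterate_affine ha₁ hφ, ← add_assoc, sub_add_cancel]

theorem tendsto_add_inv_pow_nhdsNE {𝕜 : Type*} [NormedField 𝕜] {a : 𝕜} (ha : 1 < ‖a‖) (c : 𝕜) :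
    Tendsto (fun n : ℕ ↦ c + (a ^ n)⁻¹) atTop (𝓝[≠] c) := by
  refine tendsto_nhdsWithin_iff.2 ⟨?_, .of_forall fun n ↦ ?_⟩
  · simpa only [inv_pow, add_zero] using (tendsto_pow_atTop_nhds_zero_of_norm_lt_one
      (x := a⁻¹) (by simpa using inv_lt_one_of_one_lt₀ ha)).const_add c
  · have ha₀ : a ≠ 0 := norm_pos_iff.1 (one_pos.trans ha)
    simp [ha₀]

/-- Type II hyperbolic non-automorphisms induce cyclic composition operators. -/
theorem typeII_cyclic (a : ℝ) (ha : 1 < a) (b : ℂ) (hb : 0 < b.re)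
    (φ : ℂ → ℂ) (hφ : ∀ w, φ w = (a : ℂ) * w + b) :
    ∃ f : ℂ → ℂ, MemH2 f ∧
      ∀ g : ℂ → ℂ, MemH2 g → ∀ ε : ℝ, 0 < ε →
        ∃ h ∈ Submodule.span ℂ (Set.range fun n : ℕ => f ∘ φ^[n]),
          H2normSq (g - h) < ENNReal.ofReal ε ^ 2 := by
  have ha₀ : (a : ℂ) ≠ 0 := ofReal_ne_zero.2 (one_pos.trans ha).ne'
  have ha₁ : (a : ℂ) ≠ 1 := ofReal_ne_one.2 ha.ne'
  set c : ℂ := b / (a - 1) with hc_def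
  have hc : 0 < c.re := by
    rw [hc_def, ← ofReal_one, ← ofReal_sub, div_ofReal_re]
    exact div_pos hb (sub_pos.2 ha)
  have hl (n : ℕ) : 0 < (c + ((a : ℂ) ^ n)⁻¹).re := by
    rw [add_re, ← ofReal_pow, ← ofReal_inv, ofReal_re]
    positivity
  have hlc : Tendsto (fun n : ℕ ↦ c + ((a : ℂ) ^ n)⁻¹) atTop (𝓝[≠] c) :=
    tendsto_add_inv_pow_nhdsNE (by rwa [norm_real, Real.norm_of_nonneg (by positivity)]) c
  refine ⟨fun w ↦ (w + (c + 1))⁻¹, memH2_inv_add (by simpa using add_pos hc one_pos),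
    fun g hg ε hε ↦ ?_⟩
  obtain ⟨h, hh, hgh⟩ := hg.exists_mem_span_inv_add_H2normSq_sub_lt hl hc hlc hε
  refine ⟨h, Submodule.span_le.2 ?_ hh, hgh⟩
  rintro _ ⟨n, rfl⟩
  beta_reduce
  rw [inv_add_eq_smul_comp_iterate_affine ha₀ ha₁ hφ n]
  exact Submodule.smul_mem _ _ (Submodule.subset_span (mem_range_self n))
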